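/- Let A and A' be finite abelian groups (written additively), let a ∈ A and a' ∈ A', and consider the Ganter–Rezk–Huan groups Λ_{a/A} = (A × ℝ)/⟨(a,1)⟩, Λ_{a'/A'} = (A' × ℝ)/⟨(a',1)⟩ and Λ_{(a,a')/(A×A')} = ((A × A') × ℝ)/⟨((a,a'),1)⟩. Let r : Λ_{a/A} → ℝ/ℤ and r' : Λ_{a'/A'} → ℝ/ℤ denote the homomorphisms determined by r(⟦(x,t)⟧) = t + ℤ and r'(⟦(x',t)⟧) = t + ℤ. Then the assignment ⟦((x,x'),t)⟧ ↦ (⟦(x,t)⟧, ⟦(x',t)⟧) is a well-defined injective group homomorphism Λ_{(a,a')/(A×A')} → Λ_{a/A} × Λ_{a'/A'}, and its range is exactly the fibre product {(u,v) ∈ Λ_{a/A} × Λ_{a'/A'} : r(u) = r'(v)}. In other words, Λ_{(a,a')/(A×A')} is isomorphic to the fibre product Λ_{a/A} ×_{ℝ/ℤ} Λ_{a'/A'}. (This is the group-theoretic content of the statement that cyclification satisfies Cyc(BA × BA') ≃ Cyc(BA) ×_{BT} Cyc(BA').) -/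

import Mathlib

/-!
Every element of `Λ_{a/A}` lying over `t + ℤ` has a representative whose second coordinate is
exactly `t`, so a pair in the fibre product can be represented with a common second coordinate;
this gives the range. An element of the kernel lies over `0 + ℤ`, so it is `⟦((x, x'), 0)⟧` for some
`x` and `x'`. Because `1 ∈ ℝ` has infinite order, `⟦(x, 0)⟧` vanishes only for `x = 0`, and likewise
for `x'`.
-/

/-- The Ganter–Rezk–Huan group `Λ_{a/A}`, with an arbitrary abelian group `T` and `e : T` in the
roles of `ℝ` and `1`. It is reducible so that the quotient-group API applies to it directly. -/
abbrev GanterRezkHuan {A T : Type*} [AddCommGroup A] [AddCommGroup T] (a : A) (e : T) : Type _ :=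
  (A × T) ⧸ AddSubgroup.zmultiples (a, e)

namespace GanterRezkHuan

variable {A A' T : Type*} [AddCommGroup A] [AddCommGroup A'] [AddCommGroup T]
  {a : A} {a' : A'} {e : T}

theorem mk_eq_zero_iff {x : A} {t : T} :
    ((x, t) : GanterRezkHuan a e) = 0 ↔ ∃ n : ℤ, n • a = x ∧ n • e = t := by
  simp only [QuotientAddGroup.eq_zero_iff, AddSubgroup.mem_zmultiples_iff, Prod.smul_mk,
    Prod.mk.injEq]

theorem mk_zero_eq_zero_iff (he : ¬ IsOfFinAddOrder e) {x : A} :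
    ((x, (0 : T)) : GanterRezkHuan a e) = 0 ↔ x = 0 := by
  refine ⟨fun h => ?_, fun h => h ▸ QuotientAddGroup.mk_zero _⟩
  obtain ⟨n, rfl, hn⟩ := mk_eq_zero_iff.1 h
  have n_eq_zero : n = 0 :=
    injective_zsmul_iff_not_isOfFinAddOrder.2 he (hn.trans (zero_zsmul e).symm)
  rw [n_eq_zero, zero_zsmul]

variable (a e) in
/-- The structure map `Λ_{a/A} → T/⟨e⟩`, `⟦(x, t)⟧ ↦ ⟦t⟧`, of the fibre product. -/
def toCircle : GanterRezkHuan a e →+ T ⧸ AddSubgroup.zmultiples e :=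
  QuotientAddGroup.map _ _ (AddMonoidHom.snd A T) <|
    AddSubgroup.zmultiples_le.2 (AddSubgroup.mem_zmultiples e)

@[simp]
theorem toCircle_mk (x : A) (t : T) : toCircle a e (x, t) = t := rfl

theorem eq_toCircle {r : GanterRezkHuan a e →+ T ⧸ AddSubgroup.zmultiples e}
    (hr : ∀ (x : A) (t : T), r (x, t) = t) : r = toCircle a e :=
  QuotientAddGroup.addMonoidHom_ext _ <| AddMonoidHom.ext fun ⟨x, t⟩ => hr x t

theorem exists_mk_eq_of_toCircle_eq {u : GanterRezkHuan a e} {t : T} (hu : toCircle a e u = t) :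
    ∃ x : A, ((x, t) : GanterRezkHuan a e) = u := by
  obtain ⟨⟨y, s⟩, rfl⟩ := QuotientAddGroup.mk_surjective u
  rw [toCircle_mk, QuotientAddGroup.eq, AddSubgroup.mem_zmultiples_iff] at hu
  obtain ⟨n, hn⟩ := hu
  refine ⟨y + n • a, (QuotientAddGroup.eq.2 <| AddSubgroup.mem_zmultiples_iff.2 ⟨n, ?_⟩).symm⟩
  ext <;> simp [hn]

/-- The homomorphism `Λ_{a/A} → Λ_{a'/A'}` induced by a homomorphism `A → A'` taking `a` to `a'`. -/
def map (φ : A →+ A') (hφ : φ a = a') : GanterRezkHuan a e →+ GanterRezkHuan a' e :=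
  QuotientAddGroup.map _ _ (φ.prodMap (AddMonoidHom.id T)) <|
    AddSubgroup.zmultiples_le.2 (hφ ▸ AddSubgroup.mem_zmultiples (φ a, e))

@[simp]
theorem map_mk (φ : A →+ A') (hφ : φ a = a') (x : A) (t : T) :
    map (e := e) φ hφ (x, t) = ((φ x, t) : GanterRezkHuan a' e) := rfl

theorem toCircle_map (φ : A →+ A') (hφ : φ a = a') (w : GanterRezkHuan a e) :
    toCircle a' e (map φ hφ w) = toCircle a e w :=
  DFunLike.congr_fun (eq_toCircle (r := (toCircle a' e).comp (map φ hφ)) fun x t => by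
    rw [AddMonoidHom.comp_apply, map_mk, toCircle_mk]) w

variable (a a' e) in
/-- The comparison map `Λ_{(a,a')/(A×A')} → Λ_{a/A} × Λ_{a'/A'}` induced by the two projections. -/
def toProd : GanterRezkHuan (a, a') e →+ GanterRezkHuan a e × GanterRezkHuan a' e :=
  (map (AddMonoidHom.fst A A') rfl).prod (map (AddMonoidHom.snd A A') rfl)

@[simp]
theorem toProd_mk (x : A) (x' : A') (t : T) : toProd a a' e ((x, x'), t) = (↑(x, t), ↑(x', t)) :=
  rfl

theorem toCircle_toProd_fst (w : GanterRezkHuan (a, a') e) :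
    toCircle a e (toProd a a' e w).1 = toCircle (a, a') e w :=
  toCircle_map (AddMonoidHom.fst A A') rfl w

theorem toCircle_toProd_snd (w : GanterRezkHuan (a, a') e) :
    toCircle a' e (toProd a a' e w).2 = toCircle (a, a') e w :=
  toCircle_map (AddMonoidHom.snd A A') rfl w

theorem toProd_injective (he : ¬ IsOfFinAddOrder e) : Function.Injective (toProd a a' e) := by
  refine (injective_iff_map_eq_zero _).2 fun w hw => ?_
  have toCircle_w : toCircle (a, a') e w = (0 : T) := by
    rw [← toCircle_toProd_fst, hw, Prod.fst_zero, map_zero, QuotientAddGroup.mk_zero]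
  obtain ⟨⟨x, x'⟩, rfl⟩ := exists_mk_eq_of_toCircle_eq toCircle_w
  rw [toProd_mk, Prod.mk_eq_zero, mk_zero_eq_zero_iff he, mk_zero_eq_zero_iff he] at hw
  exact (mk_zero_eq_zero_iff he).2 (Prod.mk_eq_zero.2 hw)

theorem range_toProd :
    Set.range (toProd a a' e) = {w | toCircle a e w.1 = toCircle a' e w.2} := by
  refine Set.Subset.antisymm ?_ fun ⟨u, v⟩ huv => ?_
  · rintro _ ⟨w, rfl⟩
    exact (toCircle_toProd_fst w).trans (toCircle_toProd_snd w).symm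
  · obtain ⟨t, ht⟩ := QuotientAddGroup.mk_surjective (toCircle a e u)
    obtain ⟨x, rfl⟩ := exists_mk_eq_of_toCircle_eq ht.symm
    obtain ⟨x', rfl⟩ := exists_mk_eq_of_toCircle_eq (huv.symm.trans ht.symm)
    exact ⟨((x, x'), t), toProd_mk x x' t⟩

end GanterRezkHuan

open GanterRezkHuan in
theorem stmt_5_general {A A' T : Type*} [AddCommGroup A] [AddCommGroup A'] [AddCommGroup T]
    (a : A) (a' : A') {e : T} (he : ¬ IsOfFinAddOrder e)
    (r : GanterRezkHuan a e →+ T ⧸ AddSubgroup.zmultiples e)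
    (hr : ∀ (x : A) (t : T), r (x, t) = t)
    (r' : GanterRezkHuan a' e →+ T ⧸ AddSubgroup.zmultiples e)
    (hr' : ∀ (x' : A') (t : T), r' (x', t) = t) :
    ∃ Φ : GanterRezkHuan (a, a') e →+ GanterRezkHuan a e × GanterRezkHuan a' e,
      (∀ (x : A) (x' : A') (t : T), Φ ((x, x'), t) = (↑(x, t), ↑(x', t))) ∧
      Function.Injective Φ ∧
      Set.range Φ = {w | r w.1 = r' w.2} := by
  obtain rfl := eq_toCircle hr
  obtain rfl := eq_toCircle hr'
  exact ⟨toProd a a' e, toProd_mk, toProd_injective he, range_toProd⟩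

/-- For finite abelian groups `A`, `A'`, `a ∈ A`, `a' ∈ A'`, and the
homomorphisms `r : Λ_{a/A} → ℝ/ℤ`, `r' : Λ_{a'/A'} → ℝ/ℤ` with `r ⟦(x,t)⟧ = t + ℤ`,
`r' ⟦(x',t)⟧ = t + ℤ`, the assignment `⟦((x,x'),t)⟧ ↦ (⟦(x,t)⟧, ⟦(x',t)⟧)` is a
well-defined injective homomorphism `Λ_{(a,a')/(A×A')} → Λ_{a/A} × Λ_{a'/A'}` whose range
is exactly the fibre product `{(u,v) : r u = r' v}`; i.e.
`Λ_{(a,a')/(A×A')} ≅ Λ_{a/A} ×_{ℝ/ℤ} Λ_{a'/A'}`. -/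
theorem stmt_5 {A A' : Type} [AddCommGroup A] [Fintype A] [AddCommGroup A'] [Fintype A']
    (a : A) (a' : A')
    (r : ((A × ℝ) ⧸ AddSubgroup.zmultiples ((a, (1 : ℝ)) : A × ℝ)) →+ AddCircle (1 : ℝ))
    (hr : ∀ (x : A) (t : ℝ), r (QuotientAddGroup.mk (x, t)) = (t : AddCircle (1 : ℝ)))
    (r' : ((A' × ℝ) ⧸ AddSubgroup.zmultiples ((a', (1 : ℝ)) : A' × ℝ)) →+ AddCircle (1 : ℝ))
    (hr' : ∀ (x' : A') (t : ℝ), r' (QuotientAddGroup.mk (x', t)) = (t : AddCircle (1 : ℝ))) :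
    ∃ Φ : (((A × A') × ℝ) ⧸ AddSubgroup.zmultiples (((a, a'), (1 : ℝ)) : (A × A') × ℝ)) →+
        ((A × ℝ) ⧸ AddSubgroup.zmultiples ((a, (1 : ℝ)) : A × ℝ)) ×
        ((A' × ℝ) ⧸ AddSubgroup.zmultiples ((a', (1 : ℝ)) : A' × ℝ)),
      (∀ (x : A) (x' : A') (t : ℝ),
        Φ (QuotientAddGroup.mk ((x, x'), t)) =
          (QuotientAddGroup.mk (x, t), QuotientAddGroup.mk (x', t))) ∧
      Function.Injective Φ ∧
      Set.range Φ = {w | r w.1 = r' w.2} :=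
  stmt_5_general a a' (not_isOfFinAddOrder_of_isAddTorsionFree one_ne_zero) r hr r' hr'
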